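/- Fix constants c₂ ≥ c₁ > 0 and ε > 0. There is a constant C (depending only on c₁, c₂, ε) such that: if N, M, K, L are real numbers with 1 ≤ N ≤ M ≤ K, c₁L ≤ K ≤ c₂L, and 0 < Δ ≤ c₂ L^{1/2}, then the number 𝒜₂(N,M,K,L;Δ) of quadruples (n,m,k,ℓ) of positive integers with N < n ≤ 2N, M < m ≤ 2M, K < k ≤ 2K, L < ℓ ≤ 2L and 0 < |√n + √m + √k − √ℓ| < Δ satisfies 𝒜₂(N,M,K,L;Δ) ≤ C(Δ L^{1/2} NMK + NM L^{1/2+ε}). In particular, if in addition Δ L^{1/2} ≥ 1, then 𝒜₂(N,M,K,L;Δ) ≤ C · Δ L^{1/2} NMK. -/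

import Mathlib

open Real MeasureTheory Finset
open scoped Classical

noncomputable section

/-- The set of quadruples counted by `𝒜₂(N,M,K,L;Δ)`. -/
def A2set (N M K L Δ : ℝ) : Set (ℕ × ℕ × ℕ × ℕ) :=
  {q | N < (q.1 : ℝ) ∧ (q.1 : ℝ) ≤ 2 * N ∧ M < (q.2.1 : ℝ) ∧ (q.2.1 : ℝ) ≤ 2 * M ∧
       K < (q.2.2.1 : ℝ) ∧ (q.2.2.1 : ℝ) ≤ 2 * K ∧ L < (q.2.2.2 : ℝ) ∧ (q.2.2.2 : ℝ) ≤ 2 * L ∧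
       0 < |Real.sqrt q.1 + Real.sqrt q.2.1 + Real.sqrt q.2.2.1 - Real.sqrt q.2.2.2| ∧
       |Real.sqrt q.1 + Real.sqrt q.2.1 + Real.sqrt q.2.2.1 - Real.sqrt q.2.2.2| < Δ}


/-- The additive character `e(x) = exp(2πix)`. -/
def ee (x : ℝ) : ℂ := Complex.exp (((2 * π * x : ℝ) : ℂ) * Complex.I)

lemma norm_ee (x : ℝ) : ‖ee x‖ = 1 := Complex.norm_exp_ofReal_mul_I _

lemma ee_add (x y : ℝ) : ee (x + y) = ee x * ee y := by
  unfold ee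
  rw [← Complex.exp_add]; congr 1; push_cast; ring

lemma ee_int (n : ℤ) : ee n = 1 := by
  unfold ee
  rw [Complex.exp_eq_one_iff]
  exact ⟨n, by push_cast; ring⟩

lemma ee_zero : ee 0 = 1 := by simpa using ee_int 0

lemma ee_conj (x : ℝ) : (starRingEnd ℂ) (ee x) = ee (-x) := by
  unfold ee
  rw [← Complex.exp_conj]; congr 1
  rw [map_mul, Complex.conj_ofReal, Complex.conj_I]; push_cast; ring

lemma ee_nat_mul (x : ℝ) (n : ℕ) : ee (n * x) = ee x ^ n := by
  unfold ee
  rw [← Complex.exp_nat_mul]; congr 1; push_cast; ring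

lemma ee_sub_one_lower (x : ℝ) : 4 * |x - round x| ≤ ‖ee x - 1‖ := by
  have h1 : ee x = ee (x - round x) := by
    have := ee_add (x - round x) ((round x : ℤ) : ℝ)
    rw [ee_int, mul_one, sub_add_cancel] at this
    exact this
  rw [h1]
  set y := x - round x with hy
  have hyb : |y| ≤ 1 / 2 := abs_sub_round x
  have h2 : ee y - 1 = Complex.exp (Complex.I * ((2 * π * y : ℝ) : ℂ)) - 1 := by
    unfold ee; rw [mul_comm]
  rw [h2, Complex.norm_exp_I_mul_ofReal_sub_one, Real.norm_eq_abs, abs_mul, abs_two]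
  have h3 : (2 * π * y) / 2 = π * y := by ring
  rw [h3]
  have h4 : |π * y| ≤ π / 2 := by
    rw [abs_mul, abs_of_pos pi_pos]; nlinarith [pi_pos]
  have h5 := Real.mul_abs_le_abs_sin h4
  rw [abs_mul, abs_of_pos pi_pos] at h5
  have h6 : 2 / π * (π * |y|) = 2 * |y| := by field_simp
  linarith

lemma geom_bound (x : ℝ) (n : ℕ) :
    ‖∑ i ∈ range n, ee (i * x)‖ * |x - round x| ≤ 1 := by
  have h1 : (∑ i ∈ range n, ee (i * x)) * (ee x - 1) = ee x ^ n - 1 := by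
    simp_rw [ee_nat_mul]
    exact geom_sum_mul _ _
  have h2 : ‖∑ i ∈ range n, ee (i * x)‖ * ‖ee x - 1‖ ≤ 2 := by
    rw [← norm_mul, h1]
    calc _ ≤ ‖ee x ^ n‖ + ‖(1:ℂ)‖ := norm_sub_le _ _
      _ = 2 := by rw [norm_pow, norm_ee]; norm_num
  have h3 := mul_le_mul_of_nonneg_left (ee_sub_one_lower x) (norm_nonneg (∑ i ∈ range n, ee (i * x)))
  nlinarith

lemma geom_triv (x : ℝ) (n : ℕ) : ‖∑ i ∈ range n, ee (i * x)‖ ≤ n := by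
  refine (norm_sum_le _ _).trans ?_
  simp [norm_ee]

/-- `min (X, 1/‖x‖)`. -/
def ff (X x : ℝ) : ℝ := X / max 1 (X * |x - round x|)

lemma ff_nonneg {X : ℝ} (hX : 0 ≤ X) (x : ℝ) : 0 ≤ ff X x := by
  unfold ff; positivity

lemma ff_le {X : ℝ} (hX : 0 ≤ X) (x : ℝ) : ff X x ≤ X := by
  unfold ff
  exact div_le_self hX (le_max_left _ _)

lemma ff_mul_le {X : ℝ} (hX : 0 ≤ X) (x : ℝ) : ff X x * |x - round x| ≤ 1 := by
  unfold ff
  rw [div_mul_eq_mul_div, div_le_one (by positivity)]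
  exact le_max_right _ _

lemma le_ff {X s x : ℝ} (hX : 0 ≤ X) (hs : s ≤ X) (hsx : s * |x - round x| ≤ 1) :
    s ≤ ff X x := by
  unfold ff
  rw [le_div_iff₀ (by positivity)]
  rcases le_total 1 (X * |x - round x|) with h | h
  · rw [max_eq_right h]; nlinarith
  · rw [max_eq_left h]; linarith

lemma geom_ff (x X : ℝ) (n : ℕ) (hn : (n:ℝ) ≤ X) : ‖∑ i ∈ range n, ee (i * x)‖ ≤ ff X x := by
  exact le_ff ((Nat.cast_nonneg n).trans hn) ((geom_triv x n).trans hn) (geom_bound x n)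

/-- Re-indexing a triangular sum. -/
lemma tri_sum (F : ℕ → ℕ → ℂ) (X : ℕ) :
    ∑ i ∈ range X, ∑ j ∈ range i, F i j = ∑ d ∈ Ico 1 X, ∑ j ∈ range (X - d), F (j + d) j := by
  rw [Finset.sum_sigma', Finset.sum_sigma']
  refine Finset.sum_bij' (fun p _ => ⟨p.1 - p.2, p.2⟩) (fun p _ => ⟨p.2 + p.1, p.2⟩) ?_ ?_ ?_ ?_ ?_
  · rintro ⟨a, b⟩ h; simp at h ⊢; omega
  · rintro ⟨a, b⟩ h; simp at h ⊢; omega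
  · rintro ⟨a, b⟩ h; simp at h ⊢; omega
  · rintro ⟨a, b⟩ h; simp at h ⊢
  · rintro ⟨a, b⟩ h; simp at h ⊢; congr 1; omega

lemma sq_sum (F : ℕ → ℕ → ℂ) (X : ℕ) :
    ∑ i ∈ range X, ∑ j ∈ range X, F i j = ∑ i ∈ range X, F i i
      + ∑ i ∈ range X, ∑ j ∈ range i, F i j + ∑ i ∈ range X, ∑ j ∈ range i, F j i := by
  induction X with
  | zero => simp
  | succ n ih =>
    simp only [Finset.sum_range_succ, Finset.sum_add_distrib, ih]
    ring

lemma weyl (a b c : ℝ) (X : ℕ) :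
    ‖∑ i ∈ range X, ee (a * i ^ 2 + b * i + c)‖ ^ 2 ≤
      X + 2 * ∑ d ∈ Ico 1 X, ff X (2 * a * d) := by
  set q : ℕ → ℝ := fun i => a * i ^ 2 + b * i + c with hq
  set S := ∑ i ∈ range X, ee (q i) with hS
  have h1 : ((‖S‖ ^ 2 : ℝ) : ℂ) = ∑ i ∈ range X, ∑ j ∈ range X, ee (q i) * (starRingEnd ℂ) (ee (q j)) := by
    rw [← Finset.sum_mul_sum, ← map_sum, Complex.mul_conj, Complex.normSq_eq_norm_sq]
  have hd : ∀ j d : ℕ, ee (q (j + d)) * (starRingEnd ℂ) (ee (q j)) =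
      ee (a * d ^ 2 + b * d) * ee (j * (2 * a * d)) := by
    intro j d
    rw [ee_conj, ← ee_add, ← ee_add]
    congr 1; simp only [hq]; push_cast; ring
  have hb : ‖∑ i ∈ range X, ∑ j ∈ range i, ee (q i) * (starRingEnd ℂ) (ee (q j))‖ ≤
      ∑ d ∈ Ico 1 X, ff X (2 * a * d) := by
    rw [tri_sum (fun i j => ee (q i) * (starRingEnd ℂ) (ee (q j)))]
    refine (norm_sum_le _ _).trans (Finset.sum_le_sum fun d hd' => ?_)
    simp_rw [hd]
    rw [← Finset.mul_sum, norm_mul, norm_ee, one_mul]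
    exact geom_ff _ _ _ (by exact_mod_cast Nat.sub_le _ _)
  have hb2 : ‖∑ i ∈ range X, ∑ j ∈ range i, ee (q j) * (starRingEnd ℂ) (ee (q i))‖ ≤
      ∑ d ∈ Ico 1 X, ff X (2 * a * d) := by
    refine le_trans (le_of_eq ?_) hb
    rw [← Complex.norm_conj]
    congr 1
    simp only [map_sum, map_mul, Complex.conj_conj]
    refine Finset.sum_congr rfl fun i _ => Finset.sum_congr rfl fun j _ => mul_comm _ _
  have hdg : ‖∑ i ∈ range X, ee (q i) * (starRingEnd ℂ) (ee (q i))‖ ≤ X := by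
    refine (norm_sum_le _ _).trans ?_
    simp [norm_ee]
  have h2 : ‖S‖ ^ 2 = ‖((‖S‖ ^ 2 : ℝ) : ℂ)‖ := by
    rw [Complex.norm_real, Real.norm_eq_abs, abs_of_nonneg (by positivity)]
  rw [h2, h1, sq_sum]
  refine (norm_add_le _ _).trans ?_
  have := norm_add_le (∑ i ∈ range X, ee (q i) * (starRingEnd ℂ) (ee (q i)))
    (∑ i ∈ range X, ∑ j ∈ range i, ee (q i) * (starRingEnd ℂ) (ee (q j)))
  linarith

/-- The divisor bound. -/
lemma divisor_bound (ε : ℝ) (hε : 0 < ε) :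
    ∃ C : ℝ, 1 ≤ C ∧ ∀ n : ℕ, n ≠ 0 → (#(n.divisors) : ℝ) ≤ C * (n:ℝ) ^ ε := by
  set C0 : ℝ := 1 + 1 / (ε * Real.log 2) with hC0
  have hl2 : 0 < Real.log 2 := Real.log_pos (by norm_num)
  have hC01 : 1 ≤ C0 := by
    have : 0 < 1 / (ε * Real.log 2) := by positivity
    linarith
  set P : ℕ := ⌈(2:ℝ) ^ (1 / ε)⌉₊ with hP
  refine ⟨C0 ^ P, one_le_pow₀ hC01, ?_⟩
  intro n hn
  rw [Nat.card_divisors hn]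
  push_cast
  have key : ∀ p ∈ n.primeFactors, ((n.factorization p : ℝ) + 1) ≤
      (if p < P then C0 else 1) * ((p:ℝ) ^ (n.factorization p)) ^ ε := by
    intro p hp
    have hpp : p.Prime := Nat.prime_of_mem_primeFactors hp
    have hp2 : (2:ℝ) ≤ p := by exact_mod_cast hpp.two_le
    set v := n.factorization p
    have hpow : ((p:ℝ) ^ v) ^ ε = ((p:ℝ) ^ ε) ^ v := by
      rw [← Real.rpow_natCast, ← Real.rpow_mul (by positivity), mul_comm,
        Real.rpow_mul (by positivity), Real.rpow_natCast]
    split_ifs with h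
    · have h1 : (1:ℝ) + ε * Real.log 2 * v ≤ ((p:ℝ) ^ v) ^ ε := by
        calc (1:ℝ) + ε * Real.log 2 * v ≤ Real.exp (ε * Real.log 2 * v) := by
              linarith [Real.add_one_le_exp (ε * Real.log 2 * v)]
          _ = ((2:ℝ) ^ v) ^ ε := by
              rw [← Real.rpow_natCast, ← Real.rpow_mul (by norm_num),
                Real.rpow_def_of_pos (by norm_num)]
              congr 1; ring
          _ ≤ _ := by gcongr
      have h2 : (v:ℝ) + 1 ≤ C0 * (1 + ε * Real.log 2 * v) := by
        rw [hC0]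
        have h3 : (1 + 1 / (ε * Real.log 2)) * (1 + ε * Real.log 2 * v) =
          1 + v + 1 / (ε * Real.log 2) + ε * Real.log 2 * v := by field_simp; ring
        rw [h3]
        have : 0 ≤ 1 / (ε * Real.log 2) := by positivity
        have : 0 ≤ ε * Real.log 2 * v := by positivity
        linarith
      exact h2.trans (mul_le_mul_of_nonneg_left h1 (by linarith))
    · rw [one_mul, hpow]
      push Not at h
      have h1 : (2:ℝ) ≤ (p:ℝ) ^ ε := by
        have h2 : (2:ℝ) ^ (1 / ε) ≤ p := (Nat.le_ceil _).trans (by exact_mod_cast h)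
        calc (2:ℝ) = ((2:ℝ) ^ (1 / ε)) ^ ε := by
              rw [← Real.rpow_mul (by norm_num)]; field_simp; simp
          _ ≤ _ := by gcongr
      calc (v:ℝ) + 1 ≤ (2:ℝ) ^ v := by
            have : v + 1 ≤ 2 ^ v := Nat.lt_two_pow_self
            exact_mod_cast this
        _ ≤ _ := by gcongr
  refine (Finset.prod_le_prod (fun p _ => by positivity) key).trans ?_
  rw [Finset.prod_mul_distrib]
  have h1 : ∏ p ∈ n.primeFactors, ((p:ℝ) ^ (n.factorization p)) ^ ε = (n:ℝ) ^ ε := by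
    rw [Real.finsetProd_rpow _ _ (fun i _ => by positivity)]
    congr 1
    conv_rhs => rw [← Nat.prod_factorization_pow_eq_self hn]
    rw [Finsupp.prod]; push_cast; rfl
  rw [h1]
  gcongr
  rw [Finset.prod_ite]
  simp only [Finset.prod_const, one_pow, mul_one]
  refine pow_le_pow_right₀ hC01 ?_
  calc _ ≤ #(range P) := Finset.card_le_card (fun p hp => by simp at hp ⊢; exact hp.2)
    _ = P := by simp

lemma inj_harm {ι : Type*} (S : Finset ι) (F : ι → ℝ) (g : ι → ℕ) (n : ℕ) (A : ℝ) (hA : 0 ≤ A)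
    (hg : ∀ u ∈ S, g u ∈ Icc 1 n) (hinj : Set.InjOn g S) (hF : ∀ u ∈ S, F u ≤ A / g u) :
    ∑ u ∈ S, F u ≤ A * (1 + Real.log n) := by
  calc ∑ u ∈ S, F u ≤ ∑ u ∈ S, A / g u := Finset.sum_le_sum hF
    _ = ∑ i ∈ S.image g, A / (i:ℝ) := by rw [Finset.sum_image hinj]
    _ ≤ ∑ i ∈ Icc 1 n, A / (i:ℝ) := by
        refine Finset.sum_le_sum_of_subset_of_nonneg ?_ (fun i _ _ => by positivity)
        intro i hi
        obtain ⟨u, hu, rfl⟩ := Finset.mem_image.mp hi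
        exact hg u hu
    _ = A * (harmonic n : ℚ) := by
        rw [harmonic_eq_sum_Icc]; push_cast; rw [Finset.mul_sum]; rfl
    _ ≤ _ := by gcongr; exact harmonic_le_one_add_log n

/-- Sum over the integers nearest to a fixed multiple `t A`. -/
lemma window_sum (S : Finset ℕ) (F : ℕ → ℝ) (A X y : ℝ) (hA : 1 ≤ A) (hX : 0 ≤ X)
    (hS : ∀ u ∈ S, |(u:ℝ) - y| ≤ A / 2) (hF0 : ∀ u ∈ S, F u ≤ X)
    (hF : ∀ u ∈ S, F u * |(u:ℝ) - y| ≤ A) :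
    ∑ u ∈ S, F u ≤ 2 * X + 2 * (A * (1 + Real.log A)) := by
  set b : ℤ := ⌊y⌋ with hb
  have hb1 : (b:ℝ) ≤ y := Int.floor_le y
  have hb2 : y < b + 1 := Int.lt_floor_add_one y
  have hsplit : S = (S.filter (fun u : ℕ => ((u:ℤ) = b ∨ (u:ℤ) = b + 1))) ∪
      ((S.filter (fun u : ℕ => (u:ℤ) < b)) ∪ (S.filter (fun u : ℕ => b + 1 < (u:ℤ)))) := by
    ext u; simp only [Finset.mem_union, Finset.mem_filter]
    constructor
    · intro h
      rcases lt_trichotomy (u:ℤ) b with h1 | h1 | h1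
      · tauto
      · tauto
      · rcases eq_or_lt_of_le (show b + 1 ≤ (u:ℤ) by omega) with h2 | h2
        · left; exact ⟨h, Or.inr h2.symm⟩
        · tauto
    · tauto
  set n := ⌊A⌋₊ with hn
  have hlog : A * (1 + Real.log n) ≤ A * (1 + Real.log A) := by
    have : (n:ℝ) ≤ A := Nat.floor_le (by linarith)
    have hn1 : 1 ≤ n := by rw [hn, Nat.one_le_floor_iff]; exact hA
    have : Real.log n ≤ Real.log A := Real.log_le_log (by exact_mod_cast hn1) this
    nlinarith
  have h0 : ∑ u ∈ S.filter (fun u : ℕ => ((u:ℤ) = b ∨ (u:ℤ) = b + 1)), F u ≤ 2 * X := by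
    have hc : #(S.filter (fun u : ℕ => ((u:ℤ) = b ∨ (u:ℤ) = b + 1))) ≤ 2 := by
      calc _ ≤ #({b.toNat, (b+1).toNat} : Finset ℕ) := by
            refine Finset.card_le_card fun u hu => ?_
            simp only [Finset.mem_filter] at hu
            simp only [Finset.mem_insert, Finset.mem_singleton]; omega
        _ ≤ 2 := Finset.card_le_two
    calc _ ≤ ∑ u ∈ S.filter (fun u : ℕ => ((u:ℤ) = b ∨ (u:ℤ) = b + 1)), X :=
          Finset.sum_le_sum fun u hu => hF0 u (Finset.mem_filter.mp hu).1
      _ = _ * X := by rw [Finset.sum_const, nsmul_eq_mul]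
      _ ≤ 2 * X := by gcongr; exact_mod_cast hc
  have h1 : ∑ u ∈ S.filter (fun u : ℕ => (u:ℤ) < b), F u ≤ A * (1 + Real.log n) := by
    have hh : ∀ u ∈ S.filter (fun u : ℕ => (u:ℤ) < b), (((b - u).toNat : ℕ) : ℝ) = b - u := by
      intro u hu
      have h3 := (Finset.mem_filter.mp hu).2
      have : (((b - u).toNat : ℕ) : ℤ) = b - u := by omega
      exact_mod_cast this
    refine inj_harm _ F (fun u => (b - u).toNat) n A (by linarith) ?_ ?_ ?_
    · intro u hu
      have h3 := (Finset.mem_filter.mp hu).2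
      have h4 := hS u (Finset.mem_filter.mp hu).1
      rw [Finset.mem_Icc]
      refine ⟨by omega, ?_⟩
      rw [hn]
      refine Nat.le_floor ?_
      rw [hh u hu]
      have := (abs_le.mp h4).1
      linarith
    · intro u hu v hv h
      have h3 := (Finset.mem_filter.mp hu).2
      have h4 := (Finset.mem_filter.mp hv).2
      simp only at h
      omega
    · intro u hu
      have h3 := (Finset.mem_filter.mp hu).2
      have h4 := hF u (Finset.mem_filter.mp hu).1
      have h5 : (u:ℝ) < b := by exact_mod_cast h3
      rw [hh u hu]
      rw [abs_of_neg (by linarith)] at h4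
      rcases le_or_gt (F u) 0 with h6 | h6
      · exact h6.trans (div_nonneg (by linarith) (by linarith))
      · rw [le_div_iff₀ (by linarith)]
        nlinarith
  have h2 : ∑ u ∈ S.filter (fun u : ℕ => b + 1 < (u:ℤ)), F u ≤ A * (1 + Real.log n) := by
    have hh : ∀ u ∈ S.filter (fun u : ℕ => b + 1 < (u:ℤ)), (((u - b - 1).toNat : ℕ) : ℝ) = u - b - 1 := by
      intro u hu
      have h3 := (Finset.mem_filter.mp hu).2
      have : (((u - b - 1).toNat : ℕ) : ℤ) = u - b - 1 := by omega
      exact_mod_cast this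
    refine inj_harm _ F (fun u => (u - b - 1).toNat) n A (by linarith) ?_ ?_ ?_
    · intro u hu
      have h3 := (Finset.mem_filter.mp hu).2
      have h4 := hS u (Finset.mem_filter.mp hu).1
      rw [Finset.mem_Icc]
      refine ⟨by omega, ?_⟩
      rw [hn]
      refine Nat.le_floor ?_
      rw [hh u hu]
      have := (abs_le.mp h4).2
      linarith
    · intro u hu v hv h
      have h3 := (Finset.mem_filter.mp hu).2
      have h4 := (Finset.mem_filter.mp hv).2
      simp only at h
      omega
    · intro u hu
      have h3 := (Finset.mem_filter.mp hu).2
      have h4 := hF u (Finset.mem_filter.mp hu).1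
      have h5 : (b:ℝ) + 1 < u := by exact_mod_cast h3
      rw [hh u hu]
      rw [abs_of_pos (by linarith)] at h4
      rcases le_or_gt (F u) 0 with h6 | h6
      · exact h6.trans (div_nonneg (by linarith) (by linarith))
      · rw [le_div_iff₀ (by linarith)]
        nlinarith
  rw [hsplit, Finset.sum_union, Finset.sum_union]
  · linarith
  · rw [Finset.disjoint_left]; intro u hu hv
    have h3 := (Finset.mem_filter.mp hu).2
    have h4 := (Finset.mem_filter.mp hv).2
    omega
  · rw [Finset.disjoint_left]; intro u hu hv
    rw [Finset.mem_union] at hv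
    have h3 := (Finset.mem_filter.mp hu).2
    rcases hv with hv | hv <;> have h4 := (Finset.mem_filter.mp hv).2 <;> omega

lemma ff_sum (A X : ℝ) (hA : 1 ≤ A) (hX : 0 ≤ X) (U : ℕ) :
    ∑ u ∈ Icc 1 U, ff X (u / A) ≤ (U / A + 2) * (2 * X + 2 * (A * (1 + Real.log A))) := by
  have hA0 : 0 < A := by linarith
  have hlog : 0 ≤ Real.log A := Real.log_nonneg hA
  set T : ℕ := ⌊(U:ℝ) / A + 1 / 2⌋₊ with hT
  have hmap : ∀ u ∈ Icc 1 U, (round ((u:ℝ) / A)).toNat ∈ range (T + 1) := by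
    intro u hu
    rw [Finset.mem_Icc] at hu
    rw [Finset.mem_range, Nat.lt_succ_iff, hT]
    refine Nat.le_floor ?_
    have h1 : 0 ≤ round ((u:ℝ) / A) := by
      rw [round_eq]; exact Int.floor_nonneg.mpr (by positivity)
    have h2 : (((round ((u:ℝ) / A)).toNat : ℕ) : ℝ) = ((round ((u:ℝ) / A) : ℤ) : ℝ) := by
      have : (((round ((u:ℝ) / A)).toNat : ℕ) : ℤ) = round ((u:ℝ) / A) := Int.toNat_of_nonneg h1
      exact_mod_cast this
    rw [h2]
    refine (round_le_add_half _).trans ?_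
    have : (u:ℝ) ≤ U := by exact_mod_cast hu.2
    gcongr
  rw [← Finset.sum_fiberwise_of_maps_to hmap]
  have hT' : (T:ℝ) ≤ U / A + 1 / 2 := Nat.floor_le (by positivity)
  calc _ ≤ ∑ t ∈ range (T + 1), (2 * X + 2 * (A * (1 + Real.log A))) := by
        refine Finset.sum_le_sum fun t ht => ?_
        have hr : ∀ u ∈ (Icc 1 U).filter (fun u : ℕ => (round ((u:ℝ) / A)).toNat = t),
            |(u:ℝ) - t * A| = A * |(u:ℝ) / A - round ((u:ℝ) / A)| := by
          intro u hu
          have h3 := (Finset.mem_filter.mp hu).2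
          have h1 : 0 ≤ round ((u:ℝ) / A) := by
            rw [round_eq]; exact Int.floor_nonneg.mpr (by positivity)
          have h2 : (t:ℝ) = ((round ((u:ℝ) / A) : ℤ) : ℝ) := by
            have : (t : ℤ) = round ((u:ℝ) / A) := by omega
            exact_mod_cast this
          rw [← h2]
          conv_rhs => rw [← abs_of_pos hA0, ← abs_mul, abs_of_pos hA0]
          congr 1; field_simp
        refine window_sum _ (fun u : ℕ => ff X (u / A)) A X (t * A) hA hX ?_ ?_ ?_
        · intro u hu
          rw [hr u hu]
          nlinarith [abs_sub_round ((u:ℝ) / A)]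
        · intro u hu; exact ff_le hX _
        · intro u hu
          rw [hr u hu]
          nlinarith [ff_mul_le hX ((u:ℝ) / A)]
    _ = (T + 1) * (2 * X + 2 * (A * (1 + Real.log A))) := by
        rw [Finset.sum_const, Finset.card_range, nsmul_eq_mul]; push_cast; ring
    _ ≤ _ := mul_le_mul_of_nonneg_right (by linarith) (by positivity)

lemma prod_sum (f : ℕ → ℝ) (hf : ∀ u, 0 ≤ f u) (H X : ℕ) (D : ℝ)
    (hD : ∀ u ∈ Icc 1 (2 * H * X), (#(u.divisors) : ℝ) ≤ D) :
    ∑ h ∈ Ico 1 H, ∑ d ∈ Ico 1 X, f (2 * h * d) ≤ D * ∑ u ∈ Icc 1 (2 * H * X), f u := by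
  rw [← Finset.sum_product']
  have hmap : ∀ p ∈ Ico 1 H ×ˢ Ico 1 X, 2 * p.1 * p.2 ∈ Icc 1 (2 * H * X) := by
    rintro ⟨h, d⟩ hp
    simp only [Finset.mem_product, Finset.mem_Ico, Finset.mem_Icc] at hp ⊢
    refine ⟨Nat.mul_pos (by omega) (by omega), Nat.mul_le_mul (by omega) (by omega)⟩
  rw [← Finset.sum_fiberwise_of_maps_to hmap, Finset.mul_sum]
  refine Finset.sum_le_sum fun u hu => ?_
  have hu1 : 1 ≤ u := (Finset.mem_Icc.mp hu).1
  calc _ = ∑ p ∈ (Ico 1 H ×ˢ Ico 1 X).filter (fun p => 2 * p.1 * p.2 = u), f u := by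
        refine Finset.sum_congr rfl fun p hp => ?_
        rw [(Finset.mem_filter.mp hp).2]
    _ = #((Ico 1 H ×ˢ Ico 1 X).filter (fun p => 2 * p.1 * p.2 = u)) * f u := by
        rw [Finset.sum_const, nsmul_eq_mul]
    _ ≤ D * f u := by
        refine mul_le_mul_of_nonneg_right (le_trans ?_ (hD u hu)) (hf u)
        norm_cast
        refine Finset.card_le_card_of_injOn (fun p => p.1) ?_ ?_
        · rintro ⟨h, d⟩ hp
          have h2 := (Finset.mem_filter.mp hp).2
          simp only at h2
          simp only [Finset.mem_coe, Nat.mem_divisors]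
          exact ⟨⟨2 * d, by rw [← h2]; ring⟩, by omega⟩
        · rintro ⟨h, d⟩ hp ⟨h', d'⟩ hp' heq
          have h2 := (Finset.mem_filter.mp hp).2
          have h2' := (Finset.mem_filter.mp hp').2
          simp only at h2 h2' heq
          subst heq
          have hpos : 0 < 2 * h := by
            rcases Nat.eq_zero_or_pos (2 * h) with h0 | h0
            · rw [h0] at h2; omega
            · exact h0
          have := Nat.eq_of_mul_eq_mul_left hpos (h2.trans h2'.symm)
          rw [this]

lemma fejer_lower (x : ℝ) (H : ℕ) (hH : 1 ≤ H) (hx : |x - round x| ≤ 1 / (8 * H)) :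
    (H:ℝ) / 2 ≤ ‖∑ h ∈ range H, ee (h * x)‖ := by
  have hH0 : (0:ℝ) < H := by exact_mod_cast hH
  refine le_trans ?_ (Complex.re_le_norm _)
  rw [Complex.re_sum]
  have : ∀ h ∈ range H, (1:ℝ) / 2 ≤ (ee (h * x)).re := by
    intro h hh
    have h1 : ee (h * x) = ee (h * (x - round x)) := by
      have := ee_add (h * (x - round x)) (((h * round x : ℤ)) : ℝ)
      rw [ee_int, mul_one] at this
      rw [← this]; congr 1; push_cast; ring
    rw [h1]
    unfold ee
    rw [Complex.exp_ofReal_mul_I_re]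
    set y := 2 * π * (h * (x - round x)) with hy
    have hhH : (h:ℝ) ≤ H := by exact_mod_cast (Finset.mem_range.mp hh).le
    have h2 : |y| ≤ 1 := by
      rw [hy, abs_mul (2 * π), abs_mul (h:ℝ), abs_of_pos (by positivity : 0 < 2 * π), abs_of_nonneg (Nat.cast_nonneg h)]
      have h3 : (h:ℝ) * |x - round x| ≤ 1 / 8 := by
        calc (h:ℝ) * |x - round x| ≤ H * (1 / (8 * H)) := by gcongr
          _ = 1 / 8 := by field_simp
      nlinarith [pi_lt_four, pi_pos]
    have h4 : y ^ 2 ≤ 1 := by rw [← sq_abs]; nlinarith [abs_nonneg y]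
    linarith [Real.one_sub_sq_div_two_le_cos (x := y)]
  calc (H:ℝ) / 2 = ∑ h ∈ range H, (1:ℝ) / 2 := by simp; ring
    _ ≤ _ := Finset.sum_le_sum this

lemma count_fejer (φ : ℕ → ℝ) (X H : ℕ) (hH : 1 ≤ H) :
    (#((range X).filter (fun i => |φ i - round (φ i)| ≤ 1 / (8 * H))) : ℝ) ≤
      4 / H * (X + 2 * ∑ h ∈ Ico 1 H, ‖∑ i ∈ range X, ee (h * φ i)‖) := by
  have hH0 : (0:ℝ) < H := by exact_mod_cast hH
  set G : ℕ → ℕ → ℂ := fun h h' => ∑ i ∈ range X, ee (h * φ i) * (starRingEnd ℂ) (ee (h' * φ i)) with hG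
  set W := ∑ h ∈ Ico 1 H, ‖∑ i ∈ range X, ee (h * φ i)‖ with hW
  have h1 : ((∑ i ∈ range X, ‖∑ h ∈ range H, ee (h * φ i)‖ ^ 2 : ℝ) : ℂ) =
      ∑ h ∈ range H, ∑ h' ∈ range H, G h h' := by
    simp only [hG]
    push_cast
    have : ∀ i ∈ range X, ((‖∑ h ∈ range H, ee (h * φ i)‖ : ℂ)) ^ 2 =
        ∑ h ∈ range H, ∑ h' ∈ range H, ee (h * φ i) * (starRingEnd ℂ) (ee (h' * φ i)) := by
      intro i _
      rw [← Finset.sum_mul_sum, ← map_sum, Complex.mul_conj, Complex.normSq_eq_norm_sq]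
      push_cast; rfl
    rw [Finset.sum_congr rfl this, Finset.sum_comm]
    refine Finset.sum_congr rfl fun h _ => ?_
    rw [Finset.sum_comm]
  have hdiag : ‖∑ h ∈ range H, G h h‖ ≤ H * X := by
    refine (norm_sum_le _ _).trans ?_
    calc _ ≤ ∑ h ∈ range H, (X:ℝ) := by
          refine Finset.sum_le_sum fun h _ => ?_
          refine (norm_sum_le _ _).trans ?_
          simp [norm_ee]
      _ = _ := by simp
  have hb : ‖∑ i ∈ range H, ∑ j ∈ range i, G i j‖ ≤ H * W := by
    rw [tri_sum, hW, Finset.mul_sum]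
    refine (norm_sum_le _ _).trans (Finset.sum_le_sum fun d hd => ?_)
    calc _ ≤ ∑ j ∈ range (H - d), ‖∑ i ∈ range X, ee (d * φ i)‖ := by
          refine (norm_sum_le _ _).trans (Finset.sum_le_sum fun j _ => le_of_eq ?_)
          simp only [hG]
          congr 1
          refine Finset.sum_congr rfl fun i _ => ?_
          rw [ee_conj, ← ee_add]; congr 1; push_cast; ring
      _ = ((H - d : ℕ) : ℝ) * ‖∑ i ∈ range X, ee (d * φ i)‖ := by
          rw [Finset.sum_const, Finset.card_range, nsmul_eq_mul]
      _ ≤ _ := by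
          gcongr; exact Nat.sub_le _ _
  have hb2 : ‖∑ i ∈ range H, ∑ j ∈ range i, G j i‖ ≤ H * W := by
    refine le_trans (le_of_eq ?_) hb
    rw [← Complex.norm_conj]
    congr 1
    simp only [hG, map_sum, map_mul, Complex.conj_conj]
    refine Finset.sum_congr rfl fun i _ => Finset.sum_congr rfl fun j _ =>
      Finset.sum_congr rfl fun k _ => mul_comm _ _
  have h2 : ∑ i ∈ range X, ‖∑ h ∈ range H, ee (h * φ i)‖ ^ 2 ≤ H * X + H * W + H * W := by
    have h3 : ∑ i ∈ range X, ‖∑ h ∈ range H, ee (h * φ i)‖ ^ 2 =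
        ‖((∑ i ∈ range X, ‖∑ h ∈ range H, ee (h * φ i)‖ ^ 2 : ℝ) : ℂ)‖ := by
      rw [Complex.norm_real, Real.norm_eq_abs, abs_of_nonneg (by positivity)]
    rw [h3, h1, sq_sum]
    refine (norm_add_le _ _).trans ?_
    have := norm_add_le (∑ i ∈ range H, G i i) (∑ i ∈ range H, ∑ j ∈ range i, G i j)
    linarith
  set S := (range X).filter (fun i => |φ i - round (φ i)| ≤ 1 / (8 * H)) with hS
  have h3 : (#S : ℝ) * (H / 2) ^ 2 ≤ ∑ i ∈ range X, ‖∑ h ∈ range H, ee (h * φ i)‖ ^ 2 := by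
    calc (#S : ℝ) * (H / 2) ^ 2 = ∑ i ∈ S, ((H:ℝ) / 2) ^ 2 := by rw [Finset.sum_const, nsmul_eq_mul]
      _ ≤ ∑ i ∈ S, ‖∑ h ∈ range H, ee (h * φ i)‖ ^ 2 := by
          refine Finset.sum_le_sum fun i hi => ?_
          have := fejer_lower (φ i) H hH (Finset.mem_filter.mp hi).2
          gcongr
      _ ≤ _ := Finset.sum_le_sum_of_subset_of_nonneg (Finset.filter_subset _ _)
          (fun i _ _ => by positivity)
  have h4 : (#S : ℝ) * (H / 2) ^ 2 ≤ (4 / H * (X + 2 * W)) * (H / 2) ^ 2 := by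
    have : (4 / H * (X + 2 * W)) * (H / 2) ^ 2 = H * X + H * W + H * W := by field_simp; ring
    rw [this]; exact h3.trans h2
  exact le_of_mul_le_mul_right h4 (by positivity)

lemma main_count (s b c D : ℝ) (X H : ℕ) (hH : 1 ≤ H) (hs : 1 ≤ s) (hX : s ^ 2 ≤ X) (hD1 : 1 ≤ D)
    (hD : ∀ u ∈ Icc 1 (2 * H * X), (#(u.divisors) : ℝ) ≤ D) (φ : ℕ → ℝ)
    (hφ : ∀ i, φ i = 1 / s ^ 2 * (i:ℝ) ^ 2 + b * i + c) :
    (#((range X).filter (fun i => |φ i - round (φ i)| ≤ 1 / (8 * H))) : ℝ) ≤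
      4 * X / H + 136 * (X / s) * (D * (2 + Real.log X)) := by
  have hH0 : (1:ℝ) ≤ H := by exact_mod_cast hH
  have hs2 : 1 ≤ s ^ 2 := one_le_pow₀ hs
  have hX1 : (1:ℝ) ≤ X := hs2.trans hX
  have hlogX : 0 ≤ Real.log X := Real.log_nonneg hX1
  set E := D * (2 + Real.log X) with hE
  have hE1 : 1 ≤ E := by nlinarith
  refine (count_fejer φ X H hH).trans ?_
  set W := ∑ h ∈ Ico 1 H, ‖∑ i ∈ range X, ee (h * φ i)‖ with hW
  set Sg := ∑ u ∈ Icc 1 (2 * H * X), ff X (u / s ^ 2) with hSg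
  have hw : ∑ h ∈ Ico 1 H, ‖∑ i ∈ range X, ee (h * φ i)‖ ^ 2 ≤ H * X + 2 * (D * Sg) := by
    calc _ ≤ ∑ h ∈ Ico 1 H, ((X:ℝ) + 2 * ∑ d ∈ Ico 1 X, ff X (((2 * h * d : ℕ) : ℝ) / s ^ 2)) := by
          refine Finset.sum_le_sum fun h _ => ?_
          have := weyl (h * (1 / s ^ 2)) (h * b) (h * c) X
          have e1 : ∑ i ∈ range X, ee (h * φ i) =
              ∑ i ∈ range X, ee (h * (1 / s ^ 2) * (i:ℝ) ^ 2 + h * b * i + h * c) := by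
            refine Finset.sum_congr rfl fun i _ => ?_
            rw [hφ]; congr 1; ring
          have e2 : ∑ d ∈ Ico 1 X, ff X (((2 * h * d : ℕ) : ℝ) / s ^ 2) =
              ∑ d ∈ Ico 1 X, ff X (2 * (h * (1 / s ^ 2)) * d) := by
            refine Finset.sum_congr rfl fun d _ => ?_
            congr 1; push_cast; ring
          rw [e1, e2]; exact this
      _ = #(Ico 1 H) * (X:ℝ) + 2 * ∑ h ∈ Ico 1 H, ∑ d ∈ Ico 1 X, ff X (((2 * h * d : ℕ) : ℝ) / s ^ 2) := by
          rw [Finset.sum_add_distrib, Finset.sum_const, nsmul_eq_mul, Finset.mul_sum]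
      _ ≤ _ := by
          have := prod_sum (fun u : ℕ => ff X ((u:ℝ) / s ^ 2)) (fun u => ff_nonneg (by linarith) _) H X D hD
          have h2 : (#(Ico 1 H) : ℝ) ≤ H := by rw [Nat.card_Ico]; exact_mod_cast Nat.sub_le _ _
          have h3 : (#(Ico 1 H) : ℝ) * X ≤ H * X := by gcongr
          linarith
  have hσ : Sg ≤ (4 * H * X / s ^ 2) * (2 * X * (2 + Real.log X)) := by
    have h1 := ff_sum (s ^ 2) X hs2 (by linarith) (2 * H * X)
    refine h1.trans ?_
    have h2 : ((2 * H * X : ℕ) : ℝ) / s ^ 2 + 2 ≤ 4 * H * X / s ^ 2 := by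
      have : (1:ℝ) ≤ H * X / s ^ 2 := by
        rw [le_div_iff₀ (by linarith)]; nlinarith
      have h3 : ((2 * H * X : ℕ) : ℝ) / s ^ 2 = 2 * (H * X / s ^ 2) := by push_cast; ring
      have h4 : 4 * H * X / s ^ 2 = 4 * (H * X / s ^ 2) := by ring
      rw [h3, h4]; linarith
    have hlog : Real.log (s ^ 2) ≤ Real.log X := Real.log_le_log (by linarith) hX
    have hlogs : 0 ≤ Real.log (s ^ 2) := Real.log_nonneg hs2
    have h5 : s ^ 2 * (1 + Real.log (s ^ 2)) ≤ X * (1 + Real.log X) := by gcongr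
    exact mul_le_mul h2 (by linarith) (by positivity) (by positivity)
  have hcs : W ^ 2 ≤ (17 * (H * X / s) * E) ^ 2 := by
    have h1 : W ^ 2 ≤ #(Ico 1 H) * ∑ h ∈ Ico 1 H, ‖∑ i ∈ range X, ee (h * φ i)‖ ^ 2 := sq_sum_le_card_mul_sum_sq
    have h2 : (#(Ico 1 H) : ℝ) ≤ H := by rw [Nat.card_Ico]; exact_mod_cast Nat.sub_le _ _
    have h3 : W ^ 2 ≤ H * (H * X + 2 * (D * Sg)) :=
      h1.trans (mul_le_mul h2 hw (by positivity) (by linarith))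
    have h4 : D * Sg ≤ 8 * (H * X ^ 2 / s ^ 2) * E := by
      calc D * Sg ≤ D * ((4 * H * X / s ^ 2) * (2 * X * (2 + Real.log X))) := by gcongr
        _ = _ := by rw [hE]; ring
    have h5 : (H * X : ℝ) ≤ (H * X ^ 2 / s ^ 2) * E := by
      have : (H * X : ℝ) ≤ H * X ^ 2 / s ^ 2 := by
        rw [le_div_iff₀ (by linarith)]
        have : (H * X : ℝ) * s ^ 2 ≤ H * X * X := by gcongr
        linarith
      exact this.trans (le_mul_of_one_le_right (by positivity) hE1)
    calc W ^ 2 ≤ H * (17 * (H * X ^ 2 / s ^ 2) * E) := by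
          refine h3.trans (mul_le_mul_of_nonneg_left ?_ (by linarith)); linarith
      _ = 17 * (H * X / s) ^ 2 * E := by field_simp
      _ ≤ 289 * (H * X / s) ^ 2 * E ^ 2 := by
          have : E ≤ E ^ 2 := by nlinarith
          gcongr; norm_num
      _ = _ := by ring
  have hW' : W ≤ 17 * (H * X / s) * E := by
    exact (sq_le_sq₀ (by positivity) (by positivity)).mp hcs
  calc 4 / (H:ℝ) * (X + 2 * W) ≤ 4 / (H:ℝ) * (X + 2 * (17 * (H * X / s) * E)) := by gcongr
    _ = _ := by field_simp; ring

lemma card_fiber_le {ι κ : Type*} [DecidableEq κ] (S : Finset ι) (T : Finset κ) (g : ι → κ) (c : ℝ)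
    (hg : ∀ u ∈ S, g u ∈ T) (hc : ∀ t ∈ T, (#(S.filter (fun u => g u = t)) : ℝ) ≤ c) :
    (#S : ℝ) ≤ c * #T := by
  rw [Finset.card_eq_sum_card_fiberwise hg]
  push_cast
  calc _ ≤ ∑ t ∈ T, c := Finset.sum_le_sum hc
    _ = _ := by rw [Finset.sum_const, nsmul_eq_mul, mul_comm]

lemma card_diam {ι : Type*} (S : Finset ι) (g : ι → ℕ) (d : ℝ) (hd : 0 ≤ d) (hg : Set.InjOn g S)
    (h : ∀ x ∈ S, ∀ y ∈ S, (g x : ℝ) - g y ≤ d) : (#S : ℝ) ≤ d + 1 := by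
  rcases S.eq_empty_or_nonempty with rfl | hne
  · simp; linarith
  obtain ⟨y, hy, hmin⟩ := Finset.exists_min_image S g hne
  have : #S ≤ #(Finset.Icc (g y) (g y + ⌊d⌋₊)) := by
    refine Finset.card_le_card_of_injOn g ?_ hg
    intro x hx
    rw [Finset.mem_coe, Finset.mem_Icc]
    refine ⟨hmin x hx, ?_⟩
    have h1 := h x hx y hy
    have h2 := hmin x hx
    have h3 : g x - g y ≤ ⌊d⌋₊ := by
      refine Nat.le_floor ?_
      rw [Nat.cast_sub h2]; exact h1
    omega
  rw [Nat.card_Icc] at this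
  have h2 : (⌊d⌋₊ : ℝ) ≤ d := Nat.floor_le hd
  have h3 : #S ≤ ⌊d⌋₊ + 1 := by omega
  have h4 : (#S : ℝ) ≤ (⌊d⌋₊ : ℝ) + 1 := by exact_mod_cast h3
  linarith

/-- The trivial bound for the number of pairs. -/
lemma pair_count_triv (c r Δ α : ℝ) (hc : 1 ≤ c) (hr : 0 < r) (hΔr : 1 ≤ Δ * r)
    (S : Finset (ℕ × ℕ))
    (hS : ∀ p ∈ S, 1 ≤ p.1 ∧ (p.1 : ℝ) ≤ 2 * c * r ^ 2 ∧ √(p.2 : ℝ) ≤ 2 * c * r ∧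
      |α + √(p.1 : ℝ) - √(p.2 : ℝ)| < Δ) :
    (#S : ℝ) ≤ 18 * c ^ 2 * (Δ * r ^ 3) := by
  have hΔ : 0 < Δ := by
    by_contra h
    push Not at h
    nlinarith
  have h1 := card_fiber_le S (Icc 1 ⌊2 * c * r ^ 2⌋₊) (fun p => p.1) (9 * c * (Δ * r)) ?_ ?_
  · have h2 : (#(Icc 1 ⌊2 * c * r ^ 2⌋₊) : ℝ) ≤ 2 * c * r ^ 2 := by
      rw [Nat.card_Icc, Nat.add_sub_cancel]; exact Nat.floor_le (by positivity)
    calc (#S : ℝ) ≤ 9 * c * (Δ * r) * (2 * c * r ^ 2) := h1.trans (by gcongr)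
      _ = _ := by ring
  · intro p hp
    obtain ⟨a, b, _⟩ := hS p hp
    rw [Finset.mem_Icc]; exact ⟨a, Nat.le_floor b⟩
  · intro k _
    have := card_diam (S.filter (fun u => u.1 = k)) (fun p => p.2) (8 * c * (Δ * r)) (by positivity) ?_ ?_
    · have h9 : 1 ≤ c * (Δ * r) := by nlinarith
      linarith
    · intro p hp q hq h
      have hp' := (Finset.mem_filter.mp hp).2
      have hq' := (Finset.mem_filter.mp hq).2
      exact Prod.ext (hp'.trans hq'.symm) h
    · intro p hp q hq
      obtain ⟨hp1, hp'⟩ := Finset.mem_filter.mp hp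
      obtain ⟨hq1, hq'⟩ := Finset.mem_filter.mp hq
      obtain ⟨-, -, a1, a2⟩ := hS p hp1
      obtain ⟨-, -, b1, b2⟩ := hS q hq1
      rw [hp'] at a2
      rw [hq'] at b2
      rw [abs_lt] at a2 b2
      have e1 : (√(p.2 : ℝ)) ^ 2 = p.2 := Real.sq_sqrt (by positivity)
      have e2 : (√(q.2 : ℝ)) ^ 2 = q.2 := Real.sq_sqrt (by positivity)
      have n1 := Real.sqrt_nonneg (p.2 : ℝ)
      have n2 := Real.sqrt_nonneg (q.2 : ℝ)
      set x := √(p.2 : ℝ)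
      set y := √(q.2 : ℝ)
      rw [← e1, ← e2]
      have h3 : x - y ≤ 2 * Δ := by linarith
      calc x ^ 2 - y ^ 2 = (x - y) * (x + y) := by ring
        _ ≤ 2 * Δ * (x + y) := by gcongr
        _ ≤ 2 * Δ * (4 * c * r) := by gcongr; linarith
        _ = _ := by ring

lemma heron (a x y Δ c r : ℝ) (ha : 2 ≤ a) (hx : 0 ≤ x) (hy : 0 ≤ y) (hc : 1 ≤ c) (hr : 0 < r)
    (hxr : x ≤ 2 * c * r) (hyr : y ≤ 2 * c * r) (har : a ≤ c * r) (hΔa : Δ ≤ a)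
    (h : |a + x - y| < Δ) :
    |x ^ 2 - ((y ^ 2 - x ^ 2) - a ^ 2) ^ 2 / (2 * a) ^ 2| ≤ 19 * c ^ 2 * (Δ * r ^ 2) / a ∧
    |y ^ 2 - x ^ 2| ≤ 8 * c * a * r := by
  have h' := abs_lt.mp h
  have hΔ : 0 < Δ := (abs_nonneg _).trans_lt h
  constructor
  · have e : x ^ 2 - ((y ^ 2 - x ^ 2) - a ^ 2) ^ 2 / (2 * a) ^ 2 =
        ((a + x - y) * (a + x + y) * (x + y - a) * (a + y - x)) / (2 * a) ^ 2 := by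
      field_simp; ring
    rw [e, abs_div, abs_mul, abs_mul, abs_mul, abs_of_pos (by positivity : 0 < (2 * a) ^ 2)]
    have h1 : |a + x + y| ≤ 5 * c * r := by rw [abs_le]; constructor <;> nlinarith
    have h2 : |x + y - a| ≤ 5 * c * r := by rw [abs_le]; constructor <;> nlinarith
    have h3 : |a + y - x| ≤ 3 * a := by rw [abs_le]; constructor <;> nlinarith
    calc _ ≤ Δ * (5 * c * r) * (5 * c * r) * (3 * a) / (2 * a) ^ 2 := by gcongr
      _ = 75 / 4 * (c ^ 2 * (Δ * r ^ 2) / a) := by field_simp; ring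
      _ ≤ 19 * (c ^ 2 * (Δ * r ^ 2) / a) := by gcongr; norm_num
      _ = _ := by ring
  · have e : y ^ 2 - x ^ 2 = (y - x) * (y + x) := by ring
    rw [e, abs_mul]
    have h1 : |y - x| ≤ 2 * a := by rw [abs_le]; constructor <;> linarith
    have h2 : |y + x| ≤ 4 * c * r := by rw [abs_le]; constructor <;> nlinarith
    calc _ ≤ 2 * a * (4 * c * r) := by gcongr
      _ = _ := by ring

set_option maxHeartbeats 2000000 in
/-- The key bound for the number of pairs `(k, ℓ)`. -/
lemma pair_count (c ε : ℝ) (hc : 1 ≤ c) (hε : 0 < ε) :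
    ∃ C : ℝ, 0 < C ∧ ∀ r Δ α : ℝ, 1 / 2 ≤ r ^ 2 → 0 < r → 0 < Δ → 2 ≤ α → α ≤ c * r →
      ∀ S : Finset (ℕ × ℕ),
      (∀ p ∈ S, 1 ≤ p.1 ∧ (p.1 : ℝ) ≤ 2 * c * r ^ 2 ∧ √(p.1 : ℝ) ≤ 2 * c * r ∧
        √(p.2 : ℝ) ≤ 2 * c * r ∧ |α + √(p.1 : ℝ) - √(p.2 : ℝ)| < Δ) →
      (#S : ℝ) ≤ C * (Δ * r ^ 3 + r * (r ^ 2) ^ ε) := by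
  obtain ⟨Cd, hCd, hdiv⟩ := divisor_bound (ε / 3) (by positivity)
  set δ := ε / 3 with hδ
  have hδ0 : 0 < δ := by positivity
  set C1 : ℝ := 2 * (152 * c + 1360 * c * (Cd * (2 + 1 / δ))) * (38 * c ^ 3) ^ (2 * δ) with hC1
  have hC10 : 0 < C1 := by positivity
  refine ⟨50000 * c ^ 3 + C1, by positivity, ?_⟩
  intro r Δ α hr2 hr hΔ hα hαr S hS
  have hRε : 0 ≤ r * (r ^ 2) ^ ε := by positivity
  have hc3 : c ^ 2 ≤ c ^ 3 := pow_le_pow_right₀ hc (by norm_num)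
  have hDr : 0 < Δ * r ^ 3 := by positivity
  rcases le_or_gt 1 (Δ * r) with hcase | hcase
  · have := pair_count_triv c r Δ α hc hr hcase S
      (fun p hp => ⟨(hS p hp).1, (hS p hp).2.1, (hS p hp).2.2.2.1, (hS p hp).2.2.2.2⟩)
    nlinarith [mul_nonneg hC10.le hRε, mul_nonneg hC10.le hDr.le, mul_le_mul_of_nonneg_right hc3 hDr.le,
      mul_nonneg (by positivity : 0 ≤ c ^ 3) hRε, mul_nonneg (by positivity : 0 ≤ c ^ 3) hDr.le]
  have hrhalf : 1 / 2 ≤ r := by nlinarith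
  have hΔα : Δ ≤ α := by nlinarith
  have hαr1 : 1 ≤ c * α * r := by nlinarith
  set η := 19 * c ^ 2 * (Δ * r ^ 2) / α with hη
  have hη0 : 0 < η := by positivity
  set J := ⌈8 * c * α * r⌉₊ with hJ
  have hJ1 : 8 * c * α * r ≤ J := Nat.le_ceil _
  have hJ2 : (J:ℝ) < 8 * c * α * r + 1 := Nat.ceil_lt_add_one (by positivity)
  set X := 2 * J + 1 with hX
  have hXr : (X:ℝ) = 2 * J + 1 := by rw [hX]; push_cast; ring
  have hX1 : (X:ℝ) ≤ 19 * c * α * r := by rw [hXr]; linarith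
  have hX2 : (2 * α) ^ 2 ≤ X := by rw [hXr]; nlinarith
  have hXpos : (1:ℝ) ≤ X := by nlinarith
  set φ : ℕ → ℝ := fun i => ((i:ℝ) - J - α ^ 2) ^ 2 / (2 * α) ^ 2 with hφ
  -- the index map
  set g : ℕ × ℕ → ℕ := fun p => p.2 + J - p.1 with hg
  have hfacts : ∀ p ∈ S, (g p : ℝ) = (p.2 : ℝ) - p.1 + J ∧ |(p.1 : ℝ) - φ (g p)| ≤ η ∧ g p < X ∧
      p.1 ≤ p.2 + J := by
    intro p hp
    obtain ⟨-, -, a1, a2, a3⟩ := hS p hp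
    have hh := heron α (√(p.1:ℝ)) (√(p.2:ℝ)) Δ c r hα (Real.sqrt_nonneg _) (Real.sqrt_nonneg _) hc hr
      a1 a2 hαr hΔα a3
    rw [Real.sq_sqrt (by positivity), Real.sq_sqrt (by positivity)] at hh
    obtain ⟨h1, h2⟩ := hh
    have h3 := abs_le.mp (h2.trans hJ1)
    have h4 : p.1 ≤ p.2 + J := by
      have : (p.1:ℝ) ≤ p.2 + J := by linarith
      exact_mod_cast this
    have h5 : (g p : ℝ) = (p.2 : ℝ) - p.1 + J := by
      simp only [hg]; rw [Nat.cast_sub h4]; push_cast; ring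
    refine ⟨h5, ?_, ?_, h4⟩
    · simp only [hφ]
      rw [h5]
      have : (p.2 : ℝ) - p.1 + J - J - α ^ 2 = ((p.2 : ℝ) - p.1) - α ^ 2 := by ring
      rw [this]; exact h1
    · have : (g p : ℝ) < X := by rw [h5, hXr]; linarith
      exact_mod_cast this
  set I := (range X).filter (fun i => |φ i - round (φ i)| ≤ η) with hI
  have hcard : (#S : ℝ) ≤ (2 * η + 1) * #I := by
    refine card_fiber_le S I g (2 * η + 1) ?_ ?_
    · intro p hp
      obtain ⟨-, h2, h3, -⟩ := hfacts p hp
      rw [hI, Finset.mem_filter, Finset.mem_range]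
      refine ⟨h3, (round_le (φ (g p)) (p.1 : ℤ)).trans ?_⟩
      rw [abs_sub_comm]; exact_mod_cast h2
    · intro i _
      refine card_diam _ (fun p => p.1) (2 * η) (by positivity) ?_ ?_
      · intro p hp q hq h
        obtain ⟨hp1, hp'⟩ := Finset.mem_filter.mp hp
        obtain ⟨hq1, hq'⟩ := Finset.mem_filter.mp hq
        have hp2 := (hfacts p hp1).2.2.2
        have hq2 := (hfacts q hq1).2.2.2
        simp only [hg] at hp' hq' h
        exact Prod.ext h (by omega)
      · intro p hp q hq
        obtain ⟨hp1, hp'⟩ := Finset.mem_filter.mp hp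
        obtain ⟨hq1, hq'⟩ := Finset.mem_filter.mp hq
        have hp2 := abs_le.mp (hfacts p hp1).2.1
        have hq2 := abs_le.mp (hfacts q hq1).2.1
        rw [hp'] at hp2
        rw [hq'] at hq2
        linarith [hp2.2, hq2.1]
  have hIX : (#I : ℝ) ≤ X := by
    have : #I ≤ #(range X) := Finset.card_filter_le _ _
    rw [Finset.card_range] at this; exact_mod_cast this
  have hηX : η * X ≤ 361 * c ^ 3 * (Δ * r ^ 3) := by
    calc η * X ≤ η * (19 * c * α * r) := by gcongr
      _ = _ := by rw [hη]; field_simp; ring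
  rcases le_or_gt (1 / 8) η with hη8 | hη8
  · have h1 : (#S : ℝ) ≤ 10 * (η * X) := by
      calc (#S : ℝ) ≤ (2 * η + 1) * #I := hcard
        _ ≤ (10 * η) * X := by gcongr; linarith
        _ = _ := by ring
    have : 0 ≤ c ^ 3 * (Δ * r ^ 3) := by positivity
    have : 0 ≤ c ^ 3 * (r * (r ^ 2) ^ ε) := by positivity
    have : 0 ≤ C1 * (Δ * r ^ 3 + r * (r ^ 2) ^ ε) := by positivity
    nlinarith
  -- main case
  set μ := min (1 / (8 * η)) α with hμ
  have hμ1 : 1 ≤ μ := by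
    refine le_min ?_ (by linarith)
    rw [le_div_iff₀ (by positivity)]; linarith
  set H := ⌊μ⌋₊ with hH
  have hH1 : 1 ≤ H := by rw [hH, Nat.one_le_floor_iff]; exact hμ1
  have hHr : (1:ℝ) ≤ H := by exact_mod_cast hH1
  have hHμ : (H:ℝ) ≤ μ := Nat.floor_le (by linarith)
  have hHμ2 : μ < H + 1 := Nat.lt_floor_add_one μ
  have hHα : (H:ℝ) ≤ α := hHμ.trans (min_le_right _ _)
  have hHη : η ≤ 1 / (8 * H) := by
    have h1 : (H:ℝ) ≤ 1 / (8 * η) := hHμ.trans (min_le_left _ _)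
    rw [le_div_iff₀ (by positivity)] at h1 ⊢
    linarith
  have hHinv : 1 / (H:ℝ) ≤ 16 * η + 2 / α := by
    have h1 : 1 / μ ≤ 8 * η + 1 / α := by
      rcases min_choice (1 / (8 * η)) α with h | h
      · rw [hμ, h, one_div_one_div]
        have : 0 < 1 / α := by positivity
        linarith
      · rw [hμ, h]; linarith
    calc 1 / (H:ℝ) ≤ 2 * (1 / μ) := by
          rw [← mul_div_assoc, mul_one, div_le_div_iff₀ (by linarith) (by linarith)]; linarith
      _ ≤ 2 * (8 * η + 1 / α) := by gcongr
      _ = _ := by ring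
  set Y := 38 * c ^ 3 * r ^ 3 with hY
  have hr3 : 1 / 8 * 2 ≤ r ^ 3 := by
    calc (1 / 8 * 2 : ℝ) = 1 / 2 * (1 / 2) := by norm_num
      _ ≤ r ^ 2 * r := mul_le_mul hr2 hrhalf (by norm_num) (by positivity)
      _ = r ^ 3 := by ring
  have hc31 : 1 ≤ c ^ 3 := one_le_pow₀ hc
  have hY1 : 1 ≤ Y := by
    have h8 : 1 * (1 / 8 * 2) ≤ c ^ 3 * r ^ 3 :=
      mul_le_mul hc31 hr3 (by norm_num) (by positivity)
    rw [hY, mul_assoc]; linarith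
  have hXα : (X:ℝ) ≤ 19 * c ^ 2 * r ^ 2 := by
    calc (X:ℝ) ≤ 19 * c * α * r := hX1
      _ ≤ 19 * c * (c * r) * r := by gcongr
      _ = _ := by ring
  have hXY : (X:ℝ) ≤ Y := by
    refine hXα.trans ?_
    have h1 : 1 ≤ 2 * c * r := by nlinarith
    calc 19 * c ^ 2 * r ^ 2 ≤ 19 * c ^ 2 * r ^ 2 * (2 * c * r) := le_mul_of_one_le_right (by positivity) h1
      _ = Y := by rw [hY]; ring
  have hUY : (2 * H * X : ℝ) ≤ Y := by
    calc (2 * H * X : ℝ) ≤ 2 * (c * r) * (19 * c ^ 2 * r ^ 2) := by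
          gcongr; exact hHα.trans hαr
      _ = Y := by rw [hY]; ring
  have hYδ : 1 ≤ Y ^ δ := Real.one_le_rpow hY1 hδ0.le
  set D := Cd * Y ^ δ with hD
  have hD1 : 1 ≤ D := by nlinarith
  have hDdiv : ∀ u ∈ Icc 1 (2 * H * X), (#(u.divisors) : ℝ) ≤ D := by
    intro u hu
    rw [Finset.mem_Icc] at hu
    refine (hdiv u (by omega)).trans ?_
    have : (u:ℝ) ≤ Y := by
      have : (u:ℝ) ≤ ((2 * H * X : ℕ) : ℝ) := by exact_mod_cast hu.2
      push_cast at this; linarith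
    rw [hD]; gcongr
  have hmain := main_count (2 * α) (-2 * (J + α ^ 2) / (2 * α) ^ 2) ((J + α ^ 2) ^ 2 / (2 * α) ^ 2) D X H
    hH1 (by linarith) hX2 hD1 hDdiv φ (by intro i; simp only [hφ]; field_simp; ring)
  have hI2 : (#I : ℝ) ≤ 4 * X / H + 136 * (X / (2 * α)) * (D * (2 + Real.log X)) := by
    refine le_trans ?_ hmain
    norm_cast
    refine Finset.card_le_card fun i hi => ?_
    rw [hI, Finset.mem_filter] at hi
    rw [Finset.mem_filter]
    exact ⟨hi.1, hi.2.trans (by exact_mod_cast hHη)⟩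
  have hlog : Real.log X ≤ Y ^ δ / δ := by
    refine (Real.log_le_log (by linarith) hXY).trans ?_
    exact Real.log_le_rpow_div (by linarith) hδ0
  have hY2 : Y ^ (2 * δ) = Y ^ δ * Y ^ δ := by
    rw [← Real.rpow_add (by linarith)]; congr 1; ring
  have hYY : 1 ≤ Y ^ (2 * δ) := Real.one_le_rpow hY1 (by positivity)
  have hE : D * (2 + Real.log X) ≤ Cd * (2 + 1 / δ) * Y ^ (2 * δ) := by
    calc D * (2 + Real.log X) ≤ D * (2 * Y ^ δ + Y ^ δ / δ) := by gcongr; linarith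
      _ = _ := by rw [hD, hY2]; ring
  have hX2α : (X:ℝ) / (2 * α) ≤ 10 * c * r := by
    rw [div_le_iff₀ (by positivity)]; nlinarith
  have h4X : 4 * X / (H:ℝ) ≤ 23104 * c ^ 3 * (Δ * r ^ 3) + 152 * c * r := by
    calc 4 * X / (H:ℝ) = 4 * X * (1 / H) := by ring
      _ ≤ 4 * X * (16 * η + 2 / α) := by gcongr
      _ = 64 * (η * X) + 16 * (X / (2 * α)) := by field_simp; ring
      _ = 64 * (η * X) + 8 / α * X := by ring
      _ ≤ 64 * (361 * c ^ 3 * (Δ * r ^ 3)) + 8 / α * (19 * c * α * r) := by gcongr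
      _ = _ := by field_simp; ring
  have hYε : Y ^ (2 * δ) = (38 * c ^ 3) ^ (2 * δ) * (r ^ 2) ^ ε := by
    rw [hY, Real.mul_rpow (by positivity) (by positivity)]
    congr 1
    rw [← Real.rpow_natCast, ← Real.rpow_natCast, ← Real.rpow_mul hr.le, ← Real.rpow_mul hr.le]
    congr 1; rw [hδ]; push_cast; ring
  have hfin : (#I : ℝ) ≤ 23104 * c ^ 3 * (Δ * r ^ 3) +
      (152 * c + 1360 * c * (Cd * (2 + 1 / δ))) * (r * Y ^ (2 * δ)) := by
    have hlX : 0 ≤ Real.log X := Real.log_nonneg hXpos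
    calc (#I : ℝ) ≤ _ := hI2
      _ ≤ (23104 * c ^ 3 * (Δ * r ^ 3) + 152 * c * r) +
          136 * (10 * c * r) * (Cd * (2 + 1 / δ) * Y ^ (2 * δ)) := by gcongr
      _ ≤ (23104 * c ^ 3 * (Δ * r ^ 3) + 152 * c * r * Y ^ (2 * δ)) +
          136 * (10 * c * r) * (Cd * (2 + 1 / δ) * Y ^ (2 * δ)) := by
            have h7 : 152 * c * r ≤ 152 * c * r * Y ^ (2 * δ) :=
              le_mul_of_one_le_right (by positivity) hYY
            linarith
      _ = _ := by ring
  calc (#S : ℝ) ≤ (2 * η + 1) * #I := hcard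
    _ ≤ 2 * #I := by gcongr; linarith
    _ ≤ 2 * (23104 * c ^ 3 * (Δ * r ^ 3) +
      (152 * c + 1360 * c * (Cd * (2 + 1 / δ))) * (r * Y ^ (2 * δ))) := by gcongr
    _ = 46208 * c ^ 3 * (Δ * r ^ 3) + C1 * (r * (r ^ 2) ^ ε) := by rw [hYε, hC1]; ring
    _ ≤ _ := by
        have : 0 ≤ c ^ 3 * (Δ * r ^ 3) := by positivity
        have : 0 ≤ c ^ 3 * (r * (r ^ 2) ^ ε) := by positivity
        have : 0 ≤ C1 * (Δ * r ^ 3) := by positivity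
        nlinarith

theorem A2_count_bound (c₁ c₂ ε : ℝ) (hc₁ : 0 < c₁) (hc : c₁ ≤ c₂) (hε : 0 < ε) :
    ∃ C : ℝ, 0 < C ∧ ∀ N M K L Δ : ℝ,
      1 ≤ N → N ≤ M → M ≤ K → c₁ * L ≤ K → K ≤ c₂ * L →
      0 < Δ → Δ ≤ c₂ * L ^ ((1:ℝ)/2) →
      ((A2set N M K L Δ).ncard : ℝ)
          ≤ C * (Δ * L ^ ((1:ℝ)/2) * N * M * K + N * M * L ^ ((1:ℝ)/2 + ε)) ∧
        (1 ≤ Δ * L ^ ((1:ℝ)/2) →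
          ((A2set N M K L Δ).ncard : ℝ) ≤ C * (Δ * L ^ ((1:ℝ)/2) * N * M * K)) := by
  have hc₂ : 0 < c₂ := lt_of_lt_of_le hc₁ hc
  have hε' : 0 < min ε (1 / 2) := lt_min hε (by norm_num)
  set ε' := min ε (1 / 2) with hε'def
  have hεl : ε' ≤ ε := min_le_left _ _
  have hεr : ε' ≤ 1 / 2 := min_le_right _ _
  obtain ⟨C, hC, hP⟩ := pair_count (8 + c₂) ε' (by linarith) hε'
  have h2ε : 0 < (2 : ℝ) ^ ε := by positivity
  refine ⟨12 * C / c₁ + 4 * C * 2 ^ ε, by positivity, ?_⟩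
  intro N M K L Δ hN hNM hMK hKL1 hKL2 hΔ _
  have hM : 1 ≤ M := hN.trans hNM
  have hK : 1 ≤ K := hM.trans hMK
  have hL : 0 < L := by
    by_contra h
    have : c₂ * L ≤ 0 := mul_nonpos_of_nonneg_of_nonpos hc₂.le (not_lt.mp h)
    linarith
  have hsq : L ^ ((1:ℝ)/2) = √L := (Real.sqrt_eq_rpow L).symm
  rw [Real.rpow_add hL, hsq]
  set r := √L with hr
  have hr0 : 0 < r := Real.sqrt_pos.mpr hL
  have hrL : r ^ 2 = L := Real.sq_sqrt hL.le
  rcases Set.eq_empty_or_nonempty (A2set N M K L Δ) with he | ⟨q0, hq0⟩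
  · rw [he]
    simp only [Set.ncard_empty, Nat.cast_zero]
    exact ⟨by positivity, fun _ => by positivity⟩
  have hL2 : 1 ≤ 2 * L := by
    have h1 : L < (q0.2.2.2 : ℝ) := hq0.2.2.2.2.2.2.1
    have h2 : (q0.2.2.2 : ℝ) ≤ 2 * L := hq0.2.2.2.2.2.2.2.1
    have h3 : 0 < q0.2.2.2 := by
      have : (0 : ℝ) < (q0.2.2.2 : ℝ) := hL.trans h1
      exact_mod_cast this
    have h4 : (1 : ℝ) ≤ (q0.2.2.2 : ℝ) := by exact_mod_cast h3
    linarith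
  -- square roots of integers up to a multiple of L
  have hsqrt : ∀ x : ℝ, x ≤ 2 * c₂ * L → √x ≤ (8 + c₂) / 2 * r := by
    intro x hx
    apply Real.sqrt_le_iff.mpr
    refine ⟨by positivity, ?_⟩
    have : ((8 + c₂) / 2 * r) ^ 2 = ((8 + c₂) / 2) ^ 2 * L := by rw [mul_pow, hrL]
    rw [this]
    refine hx.trans ?_
    apply mul_le_mul_of_nonneg_right _ hL.le
    nlinarith
  have hsqrt2 : ∀ x : ℝ, x ≤ 2 * L → √x ≤ 2 * (8 + c₂) * r := by
    intro x hx
    apply Real.sqrt_le_iff.mpr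
    refine ⟨by positivity, ?_⟩
    have : (2 * (8 + c₂) * r) ^ 2 = (2 * (8 + c₂)) ^ 2 * L := by rw [mul_pow, hrL]
    rw [this]
    refine hx.trans ?_
    apply mul_le_mul_of_nonneg_right _ hL.le
    nlinarith
  set T0 : Finset (ℕ × ℕ × ℕ × ℕ) :=
    Finset.Icc 1 ⌊2 * N⌋₊ ×ˢ Finset.Icc 1 ⌊2 * M⌋₊ ×ˢ Finset.Icc 1 ⌊2 * K⌋₊ ×ˢ
      Finset.Icc 1 ⌊2 * L⌋₊ with hT0
  set S : Finset (ℕ × ℕ × ℕ × ℕ) := T0.filter (fun q => q ∈ A2set N M K L Δ) with hS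
  have hIcc : ∀ (X : ℝ) (n : ℕ), 0 < X → X < (n : ℝ) → (n : ℝ) ≤ 2 * X →
      n ∈ Finset.Icc 1 ⌊2 * X⌋₊ := by
    intro X n hX h1 h2
    rw [Finset.mem_Icc]
    refine ⟨?_, Nat.le_floor h2⟩
    have : (0 : ℝ) < (n : ℝ) := hX.trans h1
    exact_mod_cast this
  have hSeq : A2set N M K L Δ = (S : Set (ℕ × ℕ × ℕ × ℕ)) := by
    ext q
    simp only [hS, hT0, Finset.coe_filter, Set.mem_ofPred_eq, Finset.mem_product]
    constructor
    · intro h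
      have h' := h
      obtain ⟨a1, a2, a3, a4, a5, a6, a7, a8, -, -⟩ := h'
      exact ⟨⟨hIcc N _ (by linarith) a1 a2, hIcc M _ (by linarith) a3 a4,
        hIcc K _ (by linarith) a5 a6, hIcc L _ hL a7 a8⟩, h⟩
    · exact fun h => h.2
  have hncard : ((A2set N M K L Δ).ncard : ℝ) = (#S : ℝ) := by
    rw [hSeq, Set.ncard_coe_finset]
  have hSm : ∀ q ∈ S, q ∈ A2set N M K L Δ := fun q hq => (Finset.mem_filter.mp hq).2
  set T : Finset (ℕ × ℕ) := Finset.Icc 1 ⌊2 * N⌋₊ ×ˢ Finset.Icc 1 ⌊2 * M⌋₊ with hT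
  set B : ℝ := C * (Δ * r ^ 3 + r * (r ^ 2) ^ ε') with hB
  have hB0 : 0 ≤ B := by positivity
  have hcount : (#S : ℝ) ≤ B * #T := by
    apply card_fiber_le S T (fun q => (q.1, q.2.1)) B
    · intro q hq
      obtain ⟨a1, a2, a3, a4, -⟩ := hSm q hq
      exact Finset.mem_product.mpr ⟨hIcc N _ (by linarith) a1 a2, hIcc M _ (by linarith) a3 a4⟩
    · rintro ⟨n, m⟩ _
      set F := S.filter (fun q => (q.1, q.2.1) = (n, m)) with hF
      rcases F.eq_empty_or_nonempty with hFe | ⟨w, hw⟩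
      · rw [hFe]; simpa using hB0
      have hFm : ∀ q ∈ F, q ∈ A2set N M K L Δ ∧ q.1 = n ∧ q.2.1 = m := by
        intro q hq
        obtain ⟨h1, h2⟩ := Finset.mem_filter.mp hq
        exact ⟨hSm q h1, (Prod.mk.inj h2).1, (Prod.mk.inj h2).2⟩
      obtain ⟨⟨a1, a2, a3, a4, -⟩, rfl, rfl⟩ := hFm w hw
      have hinj : Set.InjOn (fun q : ℕ × ℕ × ℕ × ℕ => q.2.2) (F : Set (ℕ × ℕ × ℕ × ℕ)) := by
        intro p hp q hq hpq
        obtain ⟨-, h1, h2⟩ := hFm p hp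
        obtain ⟨-, h3, h4⟩ := hFm q hq
        exact Prod.ext (h1.trans h3.symm) (Prod.ext (h2.trans h4.symm) hpq)
      rw [← Finset.card_image_of_injOn hinj]
      have s1 : 1 ≤ √(w.1 : ℝ) := Real.one_le_sqrt.mpr (by linarith)
      have s2 : 1 ≤ √(w.2.1 : ℝ) := Real.one_le_sqrt.mpr (by linarith)
      have s3 : √(w.1 : ℝ) ≤ (8 + c₂) / 2 * r := hsqrt _ (by linarith)
      have s4 : √(w.2.1 : ℝ) ≤ (8 + c₂) / 2 * r := hsqrt _ (by linarith)
      apply hP r Δ (√(w.1 : ℝ) + √(w.2.1 : ℝ)) (by rw [hrL]; linarith) hr0 hΔ (by linarith)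
        (by linarith)
      intro p hp
      obtain ⟨q, hq, rfl⟩ := Finset.mem_image.mp hp
      obtain ⟨⟨b1, b2, b3, b4, b5, b6, b7, b8, b9, b10⟩, h1, h2⟩ := hFm q hq
      have hpos : 0 < (8 + c₂) * r := by positivity
      refine ⟨?_, ?_, ?_, hsqrt2 _ b8, ?_⟩
      · have : (0 : ℝ) < (q.2.2.1 : ℝ) := by linarith
        exact_mod_cast this
      · rw [hrL]; linarith
      · have := hsqrt (q.2.2.1 : ℝ) (by linarith)
        linarith
      · rw [← h1, ← h2]; exact b10
  have hTcard : (#T : ℝ) ≤ 4 * (N * M) := by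
    rw [hT, Finset.card_product]
    simp only [Nat.card_Icc, Nat.add_sub_cancel]
    push_cast
    have h1 : (⌊2 * N⌋₊ : ℝ) ≤ 2 * N := Nat.floor_le (by linarith)
    have h2 : (⌊2 * M⌋₊ : ℝ) ≤ 2 * M := Nat.floor_le (by linarith)
    calc (⌊2 * N⌋₊ : ℝ) * (⌊2 * M⌋₊ : ℝ) ≤ (2 * N) * (2 * M) := by gcongr
      _ = _ := by ring
  have hmain : ((A2set N M K L Δ).ncard : ℝ) ≤ B * (4 * (N * M)) := by
    rw [hncard]
    exact hcount.trans (mul_le_mul_of_nonneg_left hTcard hB0)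
  have hLK : L ≤ K / c₁ := by rw [le_div_iff₀ hc₁]; linarith
  have hr3 : Δ * r ^ 3 ≤ Δ * r * K / c₁ := by
    calc Δ * r ^ 3 = Δ * r * L := by rw [← hrL]; ring
      _ ≤ Δ * r * (K / c₁) := by gcongr
      _ = _ := by ring
  have hup : L ^ ε' ≤ (2 * L) ^ ε' := Real.rpow_le_rpow hL.le (by linarith) hε'.le
  have hNM0 : 0 < N * M := by positivity
  constructor
  · have hLε : L ^ ε' ≤ 2 ^ ε * L ^ ε := by
      rw [← Real.mul_rpow (by norm_num) hL.le]
      exact hup.trans (Real.rpow_le_rpow_of_exponent_le hL2 hεl)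
    have hB1 : B ≤ C * (Δ * r * K / c₁ + r * (2 ^ ε * L ^ ε)) := by
      rw [hB, hrL]; gcongr
    refine hmain.trans ((mul_le_mul_of_nonneg_right hB1 (by positivity)).trans ?_)
    have e1 : 0 ≤ C * (8 / c₁ + 4 * 2 ^ ε) * (Δ * r * N * M * K) := by positivity
    have e2 : 0 ≤ 12 * C / c₁ * (N * M * (r * L ^ ε)) := by positivity
    have e3 : (12 * C / c₁ + 4 * C * 2 ^ ε) * (Δ * r * N * M * K + N * M * (r * L ^ ε)) -
        C * (Δ * r * K / c₁ + r * (2 ^ ε * L ^ ε)) * (4 * (N * M)) =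
        C * (8 / c₁ + 4 * 2 ^ ε) * (Δ * r * N * M * K) +
          12 * C / c₁ * (N * M * (r * L ^ ε)) := by ring
    linarith
  · intro hΔr
    have hLε : r * L ^ ε' ≤ 2 * (Δ * r * K / c₁) := by
      have h1 : L ^ ε' ≤ √(2 * L) := by
        rw [Real.sqrt_eq_rpow]
        exact hup.trans (Real.rpow_le_rpow_of_exponent_le hL2 hεr)
      have h2 : √(2 * L) ≤ 2 * r := by
        apply Real.sqrt_le_iff.mpr
        refine ⟨by positivity, ?_⟩
        rw [mul_pow, hrL]; linarith
      calc r * L ^ ε' ≤ r * (2 * r) := by gcongr; exact h1.trans h2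
        _ = 1 * (2 * L) := by rw [← hrL]; ring
        _ ≤ (Δ * r) * (2 * (K / c₁)) := by gcongr
        _ = _ := by ring
    have hB1 : B ≤ C * (Δ * r * K / c₁ + 2 * (Δ * r * K / c₁)) := by
      rw [hB, hrL]; gcongr
    refine hmain.trans ((mul_le_mul_of_nonneg_right hB1 (by positivity)).trans ?_)
    have e1 : 0 ≤ 4 * C * 2 ^ ε * (Δ * r * N * M * K) := by positivity
    have e3 : (12 * C / c₁ + 4 * C * 2 ^ ε) * (Δ * r * N * M * K) -
        C * (Δ * r * K / c₁ + 2 * (Δ * r * K / c₁)) * (4 * (N * M)) =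
        4 * C * 2 ^ ε * (Δ * r * N * M * K) := by ring
    linarith
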